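/- Let ζ ∈ [0, ∞) and α ∈ (0,2). Then there exists a constant C > 0 (depending only on ζ and α) such that for all r, s, z, t, τ > 0: p_ζ^{(α)}(t,r,z) · p_ζ^{(α)}(τ,z,s) ≤ C · p_ζ^{(α)}(t+τ,r,s) · [ ((r+s+z)/(s+z))^{2ζ} · p_ζ^{(α)}(t,r,z) + ((r+s+z)/(r+z))^{2ζ} · p_ζ^{(α)}(τ,z,s) ]. -/

import Mathlib

open MeasureTheory Real Set Filter

/-- Modified Bessel function of the first kind of order `ν`. -/
noncomputable def besselI (ν x : ℝ) : ℝ :=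
  ∑' k : ℕ, (x / 2) ^ (2 * (k : ℝ) + ν) / ((Nat.factorial k : ℝ) * Real.Gamma ((k : ℝ) + ν + 1))

/-- The Bessel heat kernel `p_ζ^{(2)}(t,r,s)`. -/
noncomputable def besselHeat (ζ t r s : ℝ) : ℝ :=
  (r * s) ^ ((1 : ℝ) / 2 - ζ) / (2 * t) * Real.exp (-(r ^ 2 + s ^ 2) / (4 * t)) *
    besselI (ζ - 1 / 2) (r * s / (2 * t))

/-- `σ` is a family of `α/2`-stable subordinator densities. -/
def IsStableSubordinatorDensity (α : ℝ) (σ : ℝ → ℝ → ℝ) : Prop :=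
  (∀ t, 0 < t → ∀ τ, 0 < τ → 0 ≤ σ t τ) ∧
  (∀ t, 0 < t → Measurable (σ t)) ∧
  (∀ t l : ℝ, 0 < t → 0 ≤ l →
    (∫ τ in Ioi (0 : ℝ), Real.exp (-τ * l) * σ t τ) = Real.exp (-t * l ^ (α / 2)))

/-- The `α/2`-subordinated Bessel heat kernel `p_ζ^{(α)}(t,r,s)`. -/
noncomputable def subKernel (ζ : ℝ) (σ : ℝ → ℝ → ℝ) (t r s : ℝ) : ℝ :=
  ∫ τ in Ioi (0 : ℝ), besselHeat ζ τ r s * σ t τ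

theorem Real.Gamma_add_nat_add_one_eq_mul_prod {s : ℝ} (hs : 0 < s) (n : ℕ) :
    Real.Gamma (s + n + 1) = Real.Gamma s * ∏ j ∈ Finset.range (n + 1), (s + j) := by
  induction n with
  | zero => simp [Real.Gamma_add_one hs.ne', mul_comm]
  | succ n ih =>
    rw [Finset.prod_range_succ, ← mul_assoc, ← ih, Nat.cast_add_one, ← add_assoc,
      Real.Gamma_add_one (by positivity), mul_comm]

theorem tendsto_rpow_mul_factorial_div_Gamma {s : ℝ} (hs : 0 < s) :
    Tendsto (fun n : ℕ => (n : ℝ) ^ s * (Nat.factorial n : ℝ) / Real.Gamma (s + n + 1))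
      atTop (nhds 1) := by
  have h := (Real.GammaSeq_tendsto_Gamma s).div_const (Real.Gamma s)
  rw [div_self (Real.Gamma_pos_of_pos hs).ne'] at h
  refine h.congr fun n => ?_
  rw [Real.GammaSeq, Real.Gamma_add_nat_add_one_eq_mul_prod hs, div_div, mul_comm (Finset.prod _ _)]

theorem tendsto_rpow_mul_Gamma_ratio {a ζ : ℝ} (ha : 0 < a) (hζ : 0 ≤ ζ) :
    Tendsto (fun n : ℕ => (n : ℝ) ^ ζ * (Real.Gamma (a + n + 1) / Real.Gamma (a + ζ + n + 1)))
      atTop (nhds 1) := by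
  have h := (tendsto_rpow_mul_factorial_div_Gamma (s := a + ζ) (by positivity)).div
    (tendsto_rpow_mul_factorial_div_Gamma ha) one_ne_zero
  rw [div_one] at h
  refine h.congr' ?_
  filter_upwards [eventually_gt_atTop 0] with n hn
  have hn' : (0 : ℝ) < n := by exact_mod_cast hn
  have h1 : 0 < Real.Gamma (a + n + 1) := Real.Gamma_pos_of_pos (by positivity)
  have h2 : 0 < Real.Gamma (a + ζ + n + 1) := Real.Gamma_pos_of_pos (by positivity)
  have h3 : (0 : ℝ) < Nat.factorial n := by positivity
  have h4 : (0 : ℝ) < (n : ℝ) ^ a := by positivity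
  simp only [Pi.div_apply]
  rw [Real.rpow_add hn']
  field_simp

theorem exists_bounds_of_tendsto_pos {u : ℕ → ℝ} {l : ℝ} (hu : ∀ n, 0 < u n) (hl : 0 < l)
    (h : Tendsto u atTop (nhds l)) : ∃ c C : ℝ, 0 < c ∧ 0 < C ∧ ∀ n, c ≤ u n ∧ u n ≤ C := by
  obtain ⟨C, hC⟩ := h.bddAbove_range
  obtain ⟨D, hD⟩ := (h.inv₀ hl.ne').bddAbove_range
  have hC' : ∀ n, u n ≤ C := fun n => hC ⟨n, rfl⟩
  have hD' : ∀ n, (u n)⁻¹ ≤ D := fun n => hD ⟨n, rfl⟩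
  have hD0 : 0 < D := (inv_pos.2 (hu 0)).trans_le (hD' 0)
  exact ⟨D⁻¹, C, inv_pos.2 hD0, (hu 0).trans_le (hC' 0),
    fun n => ⟨inv_le_of_inv_le₀ (hu n) (hD' n), hC' n⟩⟩

theorem exists_bounds_Gamma_ratio {a ζ : ℝ} (ha : 0 < a) (hζ : 0 ≤ ζ) :
    ∃ c C : ℝ, 0 < c ∧ 0 < C ∧ ∀ k : ℕ,
      c * (1 + k : ℝ) ^ (-ζ) ≤ Real.Gamma (k + a) / Real.Gamma (k + a + ζ) ∧
      Real.Gamma (k + a) / Real.Gamma (k + a + ζ) ≤ C * (1 + k : ℝ) ^ (-ζ) := by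
  have h : Tendsto (fun k : ℕ => (1 + k : ℝ) ^ ζ * (Real.Gamma (k + a) / Real.Gamma (k + a + ζ)))
      atTop (nhds 1) := by
    rw [← tendsto_add_atTop_iff_nat 1]
    have h1 : Tendsto (fun n : ℕ => ((2 : ℝ) / n + 1) ^ ζ) atTop (nhds 1) := by
      have := ((tendsto_const_div_atTop_nhds_zero_nat (2 : ℝ)).add_const 1).rpow_const
        (p := ζ) (Or.inr hζ)
      simpa using this
    have h2 := h1.mul (tendsto_rpow_mul_Gamma_ratio ha hζ)
    rw [mul_one] at h2
    refine h2.congr' ?_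
    filter_upwards [eventually_gt_atTop 0] with n hn
    have hn' : (0 : ℝ) < n := by exact_mod_cast hn
    rw [← mul_assoc, ← Real.mul_rpow (by positivity) (by positivity)]
    rw [show ((n + 1 : ℕ) : ℝ) + a + ζ = a + ζ + n + 1 by push_cast; ring,
      show ((n + 1 : ℕ) : ℝ) + a = a + n + 1 by push_cast; ring,
      show ((2 : ℝ) / n + 1) * n = 1 + ((n + 1 : ℕ) : ℝ) by push_cast; field_simp; ring]
  have hpos : ∀ k : ℕ, 0 < (1 + k : ℝ) ^ ζ * (Real.Gamma (k + a) / Real.Gamma (k + a + ζ)) :=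
    fun k => mul_pos (by positivity) (div_pos (Real.Gamma_pos_of_pos (by positivity))
      (Real.Gamma_pos_of_pos (by positivity)))
  obtain ⟨c, C, hc, hC, hb⟩ := exists_bounds_of_tendsto_pos hpos one_pos h
  refine ⟨c, C, hc, hC, fun k => ?_⟩
  have hk : (0 : ℝ) < (1 + k : ℝ) ^ ζ := by positivity
  rw [Real.rpow_neg (by positivity), ← div_eq_mul_inv, ← div_eq_mul_inv, div_le_iff₀' hk,
    le_div_iff₀' hk]
  exact hb k

theorem hasSum_nat_mul_cosh_series (x : ℝ) :
    HasSum (fun k : ℕ => (k : ℝ) * (x ^ (2 * k) / (Nat.factorial (2 * k) : ℝ)))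
      (x / 2 * Real.sinh x) := by
  rw [← hasSum_nat_add_iff' 1]
  simp only [Finset.range_one, Finset.sum_singleton, Nat.cast_zero, zero_mul, sub_zero]
  refine ((Real.hasSum_sinh x).mul_left (x / 2)).congr_fun fun k => ?_
  rw [show 2 * (k + 1) = 2 * k + 1 + 1 by ring, Nat.factorial_succ (2 * k + 1)]
  push_cast
  have : (Nat.factorial (2 * k + 1) : ℝ) ≠ 0 := by positivity
  field_simp
  ring

theorem tangent_le_rpow_neg {ζ m y : ℝ} (hζ : 0 ≤ ζ) (hm : 0 < m) (hy : 0 < y) :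
    m ^ (-ζ) * (1 - ζ * (y / m - 1)) ≤ y ^ (-ζ) := by
  have h1 : y ^ (-ζ) = m ^ (-ζ) * Real.exp (-ζ * Real.log (y / m)) := by
    rw [mul_comm (-ζ), ← Real.rpow_def_of_pos (div_pos hy hm), ← Real.mul_rpow hm.le (by positivity),
      mul_div_cancel₀ y hm.ne']
  rw [h1]
  gcongr
  have h2 := Real.add_one_le_exp (-ζ * Real.log (y / m))
  have h3 := mul_le_mul_of_nonneg_left (Real.log_le_sub_one_of_pos (div_pos hy hm)) hζ
  linarith

theorem summable_cosh_series_mul_rpow {ζ : ℝ} (hζ : 0 ≤ ζ) (x : ℝ) :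
    Summable fun k : ℕ => x ^ (2 * k) / (Nat.factorial (2 * k) : ℝ) * (1 + k : ℝ) ^ (-ζ) := by
  refine Summable.of_nonneg_of_le (fun k => ?_) (fun k => ?_) (Real.hasSum_cosh x).summable
  · have := (even_two_mul k).pow_nonneg x
    positivity
  · have := (even_two_mul k).pow_nonneg x
    exact mul_le_of_le_one_right (by positivity)
      (Real.rpow_le_one_of_one_le_of_nonpos (by simp) (by linarith))

theorem le_tsum_cosh_series_mul_rpow {ζ x : ℝ} (hζ : 0 ≤ ζ) (hx : 0 < x) :
    1 / 2 * (Real.exp x * (1 + x) ^ (-ζ)) ≤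
      ∑' k : ℕ, x ^ (2 * k) / (Nat.factorial (2 * k) : ℝ) * (1 + k : ℝ) ^ (-ζ) := by
  set m := 1 + x / 2 with hm
  have hm0 : 0 < m := by positivity
  have hsum := (((Real.hasSum_cosh x).mul_left (1 - ζ * (1 / m - 1))).sub
    ((hasSum_nat_mul_cosh_series x).mul_left (ζ / m))).mul_left (m ^ (-ζ))
  have h1 := hasSum_le (fun k : ℕ => ?_) hsum (summable_cosh_series_mul_rpow hζ x).hasSum
  · refine le_trans ?_ h1
    have hc : Real.exp x / 2 ≤ Real.cosh x := by
      rw [Real.cosh_eq]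
      have := Real.exp_pos (-x)
      linarith
    have hs : Real.sinh x ≤ Real.cosh x := (Real.sinh_lt_cosh x).le
    have hcp := Real.cosh_pos x
    have hmm : (1 + x) ^ (-ζ) ≤ m ^ (-ζ) :=
      Real.rpow_le_rpow_of_nonpos hm0 (by rw [hm]; linarith) (by linarith)
    have h2 : Real.cosh x ≤
        (1 - ζ * (1 / m - 1)) * Real.cosh x - ζ / m * (x / 2 * Real.sinh x) := by
      have : (1 - ζ * (1 / m - 1)) * Real.cosh x - ζ / m * (x / 2 * Real.sinh x) - Real.cosh x
          = ζ / m * (x / 2) * (Real.cosh x - Real.sinh x) := by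
        rw [hm]; field_simp; ring
      have h3 : 0 ≤ ζ / m * (x / 2) * (Real.cosh x - Real.sinh x) :=
        mul_nonneg (by positivity) (by linarith)
      linarith
    calc 1 / 2 * (Real.exp x * (1 + x) ^ (-ζ)) = (1 + x) ^ (-ζ) * (Real.exp x / 2) := by ring
      _ ≤ m ^ (-ζ) * ((1 - ζ * (1 / m - 1)) * Real.cosh x - ζ / m * (x / 2 * Real.sinh x)) := by
        gcongr
        linarith
  · have := tangent_le_rpow_neg hζ hm0 (y := 1 + k) (by positivity)
    have hw : 0 ≤ x ^ (2 * k) / (Nat.factorial (2 * k) : ℝ) := by positivity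
    calc _ = x ^ (2 * k) / (Nat.factorial (2 * k) : ℝ) *
          (m ^ (-ζ) * (1 - ζ * ((1 + k) / m - 1))) := by ring
      _ ≤ _ := by gcongr

theorem rpow_le_one_add_pow {y ζ : ℝ} {n : ℕ} (hy : 0 ≤ y) (hζ : 0 ≤ ζ) (hn : ζ ≤ n) :
    y ^ ζ ≤ 1 + y ^ n := by
  rcases le_total y 1 with h | h
  · have := Real.rpow_le_one hy h hζ
    have := pow_nonneg hy n
    linarith
  · have := Real.rpow_le_rpow_of_exponent_le h hn
    rw [Real.rpow_natCast] at this
    linarith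

theorem pow_mul_pow_div_factorial_le {x : ℝ} (hx : 0 ≤ x) (n k : ℕ) :
    x ^ n * (x ^ (2 * k) / (Nat.factorial (2 * k) : ℝ) / (1 + k : ℝ) ^ n) ≤
      (n + 2 : ℝ) ^ n * (x ^ (2 * k + n) / (Nat.factorial (2 * k + n) : ℝ)) := by
  have h1 : (Nat.factorial (2 * k + n) : ℝ) ≤
      (Nat.factorial (2 * k) : ℝ) * ((n + 2 : ℝ) ^ n * (1 + k : ℝ) ^ n) := by
    rw [← Nat.factorial_mul_ascFactorial, Nat.cast_mul]
    gcongr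
    calc (((2 * k + 1).ascFactorial n : ℕ) : ℝ) ≤ (((2 * k + n) ^ n : ℕ) : ℝ) := by
          exact_mod_cast Nat.ascFactorial_le_pow_add (2 * k) n
      _ ≤ ((n + 2 : ℝ) * (1 + k)) ^ n := by
          push_cast
          gcongr
          have : (0 : ℝ) ≤ n * k := by positivity
          linarith
      _ = _ := mul_pow _ _ _
  have h2 : (0 : ℝ) < Nat.factorial (2 * k + n) := by positivity
  have h3 : (0 : ℝ) < Nat.factorial (2 * k) := by positivity
  have h4 : (0 : ℝ) < (1 + k : ℝ) ^ n := by positivity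
  rw [div_div, ← mul_div_assoc, ← mul_div_assoc, div_le_div_iff₀ (by positivity) h2, pow_add]
  calc x ^ n * x ^ (2 * k) * (Nat.factorial (2 * k + n) : ℝ) ≤ x ^ n * x ^ (2 * k) *
        ((Nat.factorial (2 * k) : ℝ) * ((n + 2 : ℝ) ^ n * (1 + k : ℝ) ^ n)) := by gcongr
    _ = _ := by ring

theorem exists_tsum_cosh_series_mul_rpow_le {ζ : ℝ} (hζ : 0 ≤ ζ) :
    ∃ C : ℝ, 0 < C ∧ ∀ x : ℝ, 0 < x →
      ∑' k : ℕ, x ^ (2 * k) / (Nat.factorial (2 * k) : ℝ) * (1 + k : ℝ) ^ (-ζ) ≤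
        C * (Real.exp x * (1 + x) ^ (-ζ)) := by
  obtain ⟨n, hn⟩ := exists_nat_ge ζ
  refine ⟨1 + 2 ^ n + 2 ^ n * (n + 2 : ℝ) ^ n, by positivity, fun x hx => ?_⟩
  have hE : Real.cosh x ≤ Real.exp x := by
    rw [Real.cosh_eq]
    have : Real.exp (-x) ≤ Real.exp x := Real.exp_le_exp.2 (by linarith)
    linarith
  have hexp : HasSum (fun j : ℕ => x ^ j / (Nat.factorial j : ℝ)) (Real.exp x) := by
    have := NormedSpace.expSeries_div_hasSum_exp (𝔸 := ℝ) x
    rwa [← Real.exp_eq_exp_ℝ] at this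
  have hinj : Function.Injective fun k : ℕ => 2 * k + n := fun a b h => by
    simp only at h; omega
  have hs : Summable fun k : ℕ => x ^ (2 * k + n) / (Nat.factorial (2 * k + n) : ℝ) :=
    hexp.summable.comp_injective hinj
  have hs' : ∑' k : ℕ, x ^ (2 * k + n) / (Nat.factorial (2 * k + n) : ℝ) ≤ Real.exp x := by
    rw [← hexp.tsum_eq]
    exact tsum_comp_le_tsum_of_inj hexp.summable (fun j => by positivity) hinj
  have hsum := (((Real.hasSum_cosh x).mul_left (1 + 2 ^ n)).add
    (hs.hasSum.mul_left (2 ^ n * (n + 2 : ℝ) ^ n))).mul_left ((1 + x) ^ (-ζ))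
  have h1 := hasSum_le (fun k : ℕ => ?_) (summable_cosh_series_mul_rpow hζ x).hasSum hsum
  · refine h1.trans ?_
    calc _ ≤ (1 + x) ^ (-ζ) * ((1 + 2 ^ n) * Real.exp x +
          2 ^ n * (n + 2 : ℝ) ^ n * Real.exp x) := by gcongr
      _ = _ := by ring
  · have hw : 0 ≤ x ^ (2 * k) / (Nat.factorial (2 * k) : ℝ) := by positivity
    have hk : (0 : ℝ) < 1 + k := by positivity
    have h2 : (1 + k : ℝ) ^ (-ζ) = (1 + x) ^ (-ζ) * ((1 + x) / (1 + k)) ^ ζ := by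
      rw [Real.div_rpow (by positivity) hk.le, Real.rpow_neg hk.le, Real.rpow_neg (by positivity)]
      have : (0 : ℝ) < (1 + x) ^ ζ := by positivity
      field_simp
    have h3 := rpow_le_one_add_pow (y := (1 + x) / (1 + k)) (by positivity) hζ hn
    have h4 : (1 + x) ^ n ≤ 2 ^ n * (1 + x ^ n) := by
      have h5 : 1 + x ≤ 2 * max 1 x := by
        have := le_max_left 1 x
        have := le_max_right 1 x
        linarith
      calc (1 + x) ^ n ≤ (2 * max 1 x) ^ n := by gcongr
        _ = 2 ^ n * (max 1 x) ^ n := mul_pow _ _ _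
        _ ≤ 2 ^ n * (1 + x ^ n) := by
          gcongr
          rcases le_total 1 x with h | h
          · rw [max_eq_right h]; linarith
          · rw [max_eq_left h, one_pow]
            have : 0 ≤ x ^ n := by positivity
            linarith
    set w := x ^ (2 * k) / (Nat.factorial (2 * k) : ℝ) with hw'
    have h6 := pow_mul_pow_div_factorial_le hx.le n k
    rw [← hw'] at h6
    have h7 : w / (1 + k : ℝ) ^ n ≤ w := div_le_self hw (one_le_pow₀ (by simp))
    have h8 : 0 ≤ w / (1 + k : ℝ) ^ n := by positivity
    calc w * (1 + k : ℝ) ^ (-ζ) = (1 + x) ^ (-ζ) * (w * ((1 + x) / (1 + k)) ^ ζ) := by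
          rw [h2]; ring
      _ ≤ (1 + x) ^ (-ζ) * (w * (1 + ((1 + x) / (1 + k)) ^ n)) := by gcongr
      _ = (1 + x) ^ (-ζ) * (w + (1 + x) ^ n * (w / (1 + k) ^ n)) := by
          rw [div_pow]; ring
      _ ≤ (1 + x) ^ (-ζ) * (w + 2 ^ n * (1 + x ^ n) * (w / (1 + k) ^ n)) := by gcongr
      _ = (1 + x) ^ (-ζ) * (w + 2 ^ n * (w / (1 + k) ^ n) +
            2 ^ n * (x ^ n * (w / (1 + k) ^ n))) := by ring
      _ ≤ (1 + x) ^ (-ζ) * (w + 2 ^ n * w + 2 ^ n * ((n + 2 : ℝ) ^ n *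
            (x ^ (2 * k + n) / (Nat.factorial (2 * k + n) : ℝ)))) := by gcongr
      _ = _ := by ring

theorem besselI_term_eq {ζ x : ℝ} (hζ : 0 ≤ ζ) (hx : 0 < x) (k : ℕ) :
    (x / 2) ^ (2 * (k : ℝ) + (ζ - 1 / 2)) /
        ((Nat.factorial k : ℝ) * Real.Gamma ((k : ℝ) + (ζ - 1 / 2) + 1)) =
      (x / 2) ^ (ζ - 1 / 2) / √π * (x ^ (2 * k) / (Nat.factorial (2 * k) : ℝ) *
        (Real.Gamma (k + 1 / 2) / Real.Gamma (k + 1 / 2 + ζ))) := by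
  have h1 := Real.Gamma_mul_Gamma_add_half ((k : ℝ) + 1 / 2)
  rw [show (k : ℝ) + 1 / 2 + 1 / 2 = k + 1 by ring, Real.Gamma_nat_eq_factorial,
    show 2 * ((k : ℝ) + 1 / 2) = ((2 * k : ℕ) : ℝ) + 1 by push_cast; ring,
    Real.Gamma_nat_eq_factorial,
    show 1 - (((2 * k : ℕ) : ℝ) + 1) = -((2 * k : ℕ) : ℝ) by ring, Real.rpow_neg (by norm_num),
    Real.rpow_natCast] at h1
  have h2 : 0 < Real.Gamma (k + 1 / 2 + ζ) := Real.Gamma_pos_of_pos (by positivity)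
  have h3 : 0 < √π := Real.sqrt_pos.2 Real.pi_pos
  have h4 : (0 : ℝ) < Nat.factorial k := by positivity
  have h5 : (0 : ℝ) < Nat.factorial (2 * k) := by positivity
  rw [Real.rpow_add (by positivity), show 2 * (k : ℝ) = ((2 * k : ℕ) : ℝ) by push_cast; ring,
    Real.rpow_natCast, div_pow, show (k : ℝ) + (ζ - 1 / 2) + 1 = k + 1 / 2 + ζ by ring,
    eq_div_of_mul_eq h4.ne' h1]
  field_simp

theorem exists_besselI_bounds {ζ : ℝ} (hζ : 0 ≤ ζ) :
    ∃ c C : ℝ, 0 < c ∧ 0 < C ∧ ∀ x : ℝ, 0 < x →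
      c * ((x / 2) ^ (ζ - 1 / 2) * (Real.exp x * (1 + x) ^ (-ζ))) ≤ besselI (ζ - 1 / 2) x ∧
      besselI (ζ - 1 / 2) x ≤ C * ((x / 2) ^ (ζ - 1 / 2) * (Real.exp x * (1 + x) ^ (-ζ))) := by
  obtain ⟨c, C, hc, hC, h⟩ := exists_bounds_Gamma_ratio (a := 1 / 2) (by norm_num) hζ
  obtain ⟨D, hD, hD'⟩ := exists_tsum_cosh_series_mul_rpow_le hζ
  have hpi : 0 < √π := Real.sqrt_pos.2 Real.pi_pos
  refine ⟨c / (2 * √π), C * D / √π, by positivity, by positivity, fun x hx => ?_⟩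
  have hs := summable_cosh_series_mul_rpow hζ x
  have hw : ∀ k : ℕ, 0 ≤ x ^ (2 * k) / (Nat.factorial (2 * k) : ℝ) := fun k => by positivity
  have hs' : Summable fun k : ℕ => x ^ (2 * k) / (Nat.factorial (2 * k) : ℝ) *
      (Real.Gamma (k + 1 / 2) / Real.Gamma (k + 1 / 2 + ζ)) := by
    refine Summable.of_nonneg_of_le (fun k => ?_) (fun k => ?_) (hs.mul_left C)
    · exact mul_nonneg (hw k) (le_trans (by positivity) (h k).1)
    · calc _ ≤ x ^ (2 * k) / (Nat.factorial (2 * k) : ℝ) * (C * (1 + k : ℝ) ^ (-ζ)) :=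
            mul_le_mul_of_nonneg_left (h k).2 (hw k)
        _ = _ := by ring
  have hl : c * ∑' k : ℕ, x ^ (2 * k) / (Nat.factorial (2 * k) : ℝ) * (1 + k : ℝ) ^ (-ζ) ≤
      ∑' k : ℕ, x ^ (2 * k) / (Nat.factorial (2 * k) : ℝ) *
        (Real.Gamma (k + 1 / 2) / Real.Gamma (k + 1 / 2 + ζ)) := by
    rw [← tsum_mul_left]
    refine (hs.mul_left c).tsum_le_tsum (fun k => ?_) hs'
    calc _ = x ^ (2 * k) / (Nat.factorial (2 * k) : ℝ) * (c * (1 + k : ℝ) ^ (-ζ)) := by ring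
      _ ≤ _ := mul_le_mul_of_nonneg_left (h k).1 (hw k)
  have hu : ∑' k : ℕ, x ^ (2 * k) / (Nat.factorial (2 * k) : ℝ) *
        (Real.Gamma (k + 1 / 2) / Real.Gamma (k + 1 / 2 + ζ)) ≤
      C * ∑' k : ℕ, x ^ (2 * k) / (Nat.factorial (2 * k) : ℝ) * (1 + k : ℝ) ^ (-ζ) := by
    rw [← tsum_mul_left]
    refine hs'.tsum_le_tsum (fun k => ?_) (hs.mul_left C)
    calc _ ≤ x ^ (2 * k) / (Nat.factorial (2 * k) : ℝ) * (C * (1 + k : ℝ) ^ (-ζ)) :=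
          mul_le_mul_of_nonneg_left (h k).2 (hw k)
      _ = _ := by ring
  rw [besselI, tsum_congr (besselI_term_eq hζ hx), tsum_mul_left]
  have hP : 0 ≤ (x / 2) ^ (ζ - 1 / 2) / √π := by positivity
  constructor
  · calc _ = (x / 2) ^ (ζ - 1 / 2) / √π * (c * (1 / 2 * (Real.exp x * (1 + x) ^ (-ζ)))) := by
          field_simp
      _ ≤ _ := mul_le_mul_of_nonneg_left ((mul_le_mul_of_nonneg_left
          (le_tsum_cosh_series_mul_rpow hζ hx) hc.le).trans hl) hP
  · calc _ ≤ (x / 2) ^ (ζ - 1 / 2) / √π * (C * (D * (Real.exp x * (1 + x) ^ (-ζ)))) :=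
          mul_le_mul_of_nonneg_left (hu.trans (mul_le_mul_of_nonneg_left (hD' x hx) hC.le)) hP
      _ = _ := by field_simp

theorem exists_one_add_rpow_mul_exp_neg_le (a : ℝ) (ha : 0 ≤ a) :
    ∃ C : ℝ, 0 < C ∧ ∀ w : ℝ, 0 ≤ w → (1 + w) ^ a * Real.exp (-(w / 8)) ≤ C := by
  refine ⟨(8 * a + 1) ^ a, by positivity, fun w hw => ?_⟩
  have hN : 0 < 8 * a + 1 := by positivity
  have h1 : 1 + w ≤ (8 * a + 1) * Real.exp (w / (8 * a + 1)) := by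
    have h2 := Real.add_one_le_exp (w / (8 * a + 1))
    calc 1 + w ≤ (8 * a + 1) * (w / (8 * a + 1) + 1) := by
          rw [mul_add, mul_div_cancel₀ _ hN.ne']; linarith
      _ ≤ _ := by gcongr
  have h3 : w / (8 * a + 1) * a ≤ w / 8 := by
    rw [div_mul_eq_mul_div, div_le_div_iff₀ hN (by norm_num)]
    linarith
  calc (1 + w) ^ a * Real.exp (-(w / 8))
      ≤ ((8 * a + 1) * Real.exp (w / (8 * a + 1))) ^ a * Real.exp (-(w / 8)) := by gcongr
    _ = (8 * a + 1) ^ a * (Real.exp (w / (8 * a + 1) * a) * Real.exp (-(w / 8))) := by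
        rw [Real.mul_rpow hN.le (Real.exp_pos _).le, ← Real.exp_mul, mul_assoc]
    _ ≤ (8 * a + 1) ^ a * 1 := by
        gcongr
        rw [← Real.exp_add, Real.exp_le_one_iff]
        linarith
    _ = _ := mul_one _

/-- The elementary function comparable with the Bessel heat kernel. -/
noncomputable def gaussProfile (ζ τ r s : ℝ) : ℝ :=
  τ ^ (-(1 / 2 : ℝ)) * (τ + r * s / 2) ^ (-ζ) * Real.exp (-(r - s) ^ 2 / (4 * τ))

theorem gaussProfile_pos {ζ τ r s : ℝ} (hτ : 0 < τ) (hr : 0 < r) (hs : 0 < s) :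
    0 < gaussProfile ζ τ r s := by
  unfold gaussProfile
  positivity

theorem besselHeat_profile_eq {ζ τ r s : ℝ} (hτ : 0 < τ) (hr : 0 < r) (hs : 0 < s) :
    (r * s) ^ ((1 : ℝ) / 2 - ζ) / (2 * τ) * Real.exp (-(r ^ 2 + s ^ 2) / (4 * τ)) *
      ((r * s / (2 * τ) / 2) ^ (ζ - 1 / 2) *
        (Real.exp (r * s / (2 * τ)) * (1 + r * s / (2 * τ)) ^ (-ζ))) =
      4 ^ ((1 : ℝ) / 2 - ζ) / 2 * gaussProfile ζ τ r s := by
  have hrs : 0 < r * s := mul_pos hr hs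
  have h1 : Real.exp (-(r ^ 2 + s ^ 2) / (4 * τ)) * Real.exp (r * s / (2 * τ)) =
      Real.exp (-(r - s) ^ 2 / (4 * τ)) := by
    rw [← Real.exp_add]
    congr 1
    field_simp
    ring
  have h2 : (1 + r * s / (2 * τ)) ^ (-ζ) = (τ + r * s / 2) ^ (-ζ) * τ ^ ζ := by
    rw [show 1 + r * s / (2 * τ) = (τ + r * s / 2) / τ by field_simp,
      Real.div_rpow (by positivity) hτ.le, Real.rpow_neg hτ.le, div_inv_eq_mul]
  have h3 : (r * s / (2 * τ) / 2) ^ (ζ - 1 / 2) =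
      (r * s) ^ (ζ - 1 / 2) * (4 ^ ((1 : ℝ) / 2 - ζ) * τ ^ ((1 : ℝ) / 2 - ζ)) := by
    rw [show r * s / (2 * τ) / 2 = r * s / (4 * τ) by field_simp; norm_num,
      Real.div_rpow hrs.le (by positivity), div_eq_mul_inv, ← Real.rpow_neg (by positivity),
      Real.mul_rpow (by norm_num) hτ.le, neg_sub]
  have h4 : (r * s) ^ ((1 : ℝ) / 2 - ζ) * (r * s) ^ (ζ - 1 / 2) = 1 := by
    rw [← Real.rpow_add hrs]; simp
  have h5 : τ ^ ((1 : ℝ) / 2 - ζ) * τ ^ ζ / τ = τ ^ (-(1 / 2 : ℝ)) := by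
    rw [← Real.rpow_add hτ, ← Real.rpow_sub_one hτ.ne']
    norm_num
  rw [h2, h3, gaussProfile, ← h1, ← h5]
  calc _ = ((r * s) ^ ((1 : ℝ) / 2 - ζ) * (r * s) ^ (ζ - 1 / 2)) * (4 ^ ((1 : ℝ) / 2 - ζ) / 2 *
        (τ ^ ((1 : ℝ) / 2 - ζ) * τ ^ ζ / τ * (τ + r * s / 2) ^ (-ζ) *
        (Real.exp (-(r ^ 2 + s ^ 2) / (4 * τ)) * Real.exp (r * s / (2 * τ))))) := by
        field_simp
    _ = _ := by rw [h4, one_mul]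

theorem exists_besselHeat_bounds {ζ : ℝ} (hζ : 0 ≤ ζ) :
    ∃ c C : ℝ, 0 < c ∧ 0 < C ∧ ∀ τ r s : ℝ, 0 < τ → 0 < r → 0 < s →
      c * gaussProfile ζ τ r s ≤ besselHeat ζ τ r s ∧
      besselHeat ζ τ r s ≤ C * gaussProfile ζ τ r s := by
  obtain ⟨c, C, hc, hC, h⟩ := exists_besselI_bounds hζ
  refine ⟨c * (4 ^ ((1 : ℝ) / 2 - ζ) / 2), C * (4 ^ ((1 : ℝ) / 2 - ζ) / 2), by positivity,
    by positivity, fun τ r s hτ hr hs => ?_⟩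
  obtain ⟨h1, h2⟩ := h (r * s / (2 * τ)) (by positivity)
  have hp : 0 ≤ (r * s) ^ ((1 : ℝ) / 2 - ζ) / (2 * τ) *
      Real.exp (-(r ^ 2 + s ^ 2) / (4 * τ)) := by positivity
  rw [mul_assoc, mul_assoc, ← besselHeat_profile_eq hτ hr hs, besselHeat]
  constructor
  · refine le_trans (le_of_eq ?_) (mul_le_mul_of_nonneg_left h1 hp)
    ring
  · refine (mul_le_mul_of_nonneg_left h2 hp).trans (le_of_eq ?_)
    ring

theorem measurable_besselI (ν : ℝ) : Measurable (besselI ν) := by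
  unfold besselI
  fun_prop

theorem measurable_besselHeat (ζ r s : ℝ) : Measurable fun τ => besselHeat ζ τ r s := by
  unfold besselHeat
  have := measurable_besselI (ζ - 1 / 2)
  fun_prop

theorem exists_gaussProfile_le {ζ : ℝ} (hζ : 0 ≤ ζ) :
    ∃ C : ℝ, 0 < C ∧ ∀ τ r s : ℝ, 0 < τ → 0 < r → 0 < s →
      gaussProfile ζ τ r s ≤ C * (τ ^ (-(1 / 2 : ℝ)) * (τ + (r + s) ^ 2) ^ (-ζ) *
        Real.exp (-((r - s) ^ 2 / τ / 8))) := by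
  obtain ⟨C, hC, h⟩ := exists_one_add_rpow_mul_exp_neg_le ζ hζ
  refine ⟨8 ^ ζ * C, by positivity, fun τ r s hτ hr hs => ?_⟩
  set v := (r - s) ^ 2 / τ with hv
  have hv0 : 0 ≤ v := by positivity
  have hvτ : v * τ = (r - s) ^ 2 := by rw [hv]; field_simp
  have hrs : 0 < r * s := mul_pos hr hs
  have h1 : τ + (r + s) ^ 2 ≤ 8 * (τ + r * s / 2) * (1 + v) := by
    have : 0 ≤ r * s * v := by positivity
    nlinarith
  have h2 : (τ + r * s / 2) ^ (-ζ) ≤ 8 ^ ζ * (1 + v) ^ ζ * (τ + (r + s) ^ 2) ^ (-ζ) := by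
    have h3 : (τ + (r + s) ^ 2) ^ ζ ≤ 8 ^ ζ * (τ + r * s / 2) ^ ζ * (1 + v) ^ ζ := by
      rw [← Real.mul_rpow (by norm_num) (by positivity), ← Real.mul_rpow (by positivity)
        (by positivity)]
      exact Real.rpow_le_rpow (by positivity) h1 hζ
    have h4 : 0 < (τ + r * s / 2) ^ ζ := by positivity
    have h5 : 0 < (τ + (r + s) ^ 2) ^ ζ := by positivity
    rw [Real.rpow_neg (by positivity), Real.rpow_neg (by positivity), ← div_eq_mul_inv,
      inv_eq_one_div, div_le_div_iff₀ h4 h5]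
    linarith
  have h6 : Real.exp (-(r - s) ^ 2 / (4 * τ)) = Real.exp (-(v / 8)) * Real.exp (-(v / 8)) := by
    rw [← Real.exp_add, hv]
    congr 1
    field_simp
    ring
  rw [gaussProfile, h6]
  calc _ ≤ τ ^ (-(1 / 2 : ℝ)) * (8 ^ ζ * (1 + v) ^ ζ * (τ + (r + s) ^ 2) ^ (-ζ)) *
        (Real.exp (-(v / 8)) * Real.exp (-(v / 8))) := by gcongr
    _ = 8 ^ ζ * ((1 + v) ^ ζ * Real.exp (-(v / 8))) * (τ ^ (-(1 / 2 : ℝ)) *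
        (τ + (r + s) ^ 2) ^ (-ζ) * Real.exp (-(v / 8))) := by ring
    _ ≤ _ := by
      gcongr
      exact h v hv0

theorem exists_gaussProfile_le_moments {ζ : ℝ} (hζ : 0 ≤ ζ) :
    ∃ C : ℝ, 0 < C ∧ ∀ T τ r s : ℝ, 0 < T → 0 < τ → 0 < r → 0 < s →
      gaussProfile ζ τ r s ≤ C * (T ^ 2 + (r + s) ^ 2) ^ (-ζ) *
        (τ ^ (-(1 / 2 : ℝ)) + T ^ (2 * ζ) * τ ^ (-(1 / 2 + ζ))) := by
  obtain ⟨C, hC, h⟩ := exists_gaussProfile_le hζ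
  refine ⟨C * 2 ^ ζ, by positivity, fun T τ r s hT hτ hr hs => ?_⟩
  have h1 : (τ + (r + s) ^ 2) ^ (-ζ) ≤
      (T ^ 2 + (r + s) ^ 2) ^ (-ζ) * (2 ^ ζ * (1 + T ^ (2 * ζ) * τ ^ (-ζ))) := by
    have h2 : (T ^ 2 + (r + s) ^ 2) ^ ζ ≤ (τ + (r + s) ^ 2) ^ ζ * (1 + T ^ 2 / τ) ^ ζ := by
      rw [← Real.mul_rpow (by positivity) (by positivity)]
      refine Real.rpow_le_rpow (by positivity) ?_ hζ
      have : τ * (T ^ 2 / τ) = T ^ 2 := by field_simp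
      have h3 : 0 ≤ (r + s) ^ 2 * (T ^ 2 / τ) := by positivity
      nlinarith
    have h3 : (1 + T ^ 2 / τ) ^ ζ ≤ 2 ^ ζ * (1 + T ^ (2 * ζ) * τ ^ (-ζ)) := by
      have h4 : T ^ (2 * ζ) * τ ^ (-ζ) = (T ^ 2 / τ) ^ ζ := by
        rw [Real.div_rpow (by positivity) hτ.le, Real.rpow_mul hT.le, Real.rpow_neg hτ.le,
          Real.rpow_two, div_eq_mul_inv]
      rw [h4]
      have hy : 0 ≤ T ^ 2 / τ := by positivity
      calc (1 + T ^ 2 / τ) ^ ζ ≤ (2 * max 1 (T ^ 2 / τ)) ^ ζ := by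
            refine Real.rpow_le_rpow (by positivity) ?_ hζ
            have := le_max_left 1 (T ^ 2 / τ)
            have := le_max_right 1 (T ^ 2 / τ)
            linarith
        _ = 2 ^ ζ * (max 1 (T ^ 2 / τ)) ^ ζ := Real.mul_rpow (by norm_num) (by positivity)
        _ ≤ _ := by
          gcongr
          have : 0 ≤ (T ^ 2 / τ) ^ ζ := by positivity
          rcases le_total 1 (T ^ 2 / τ) with h | h
          · rw [max_eq_right h]; linarith
          · rw [max_eq_left h, Real.one_rpow]; linarith
    have h5 : 0 < (τ + (r + s) ^ 2) ^ ζ := by positivity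
    have h6 : 0 < (T ^ 2 + (r + s) ^ 2) ^ ζ := by positivity
    rw [Real.rpow_neg (by positivity), Real.rpow_neg (by positivity), inv_mul_eq_div,
      inv_eq_one_div, div_le_div_iff₀ h5 h6, one_mul]
    calc _ ≤ _ := h2
      _ ≤ _ := by rw [mul_comm]; gcongr
  have h7 : Real.exp (-((r - s) ^ 2 / τ / 8)) ≤ 1 := by
    rw [Real.exp_le_one_iff, Left.neg_nonpos_iff]
    positivity
  have h8 : τ ^ (-(1 / 2 + ζ)) = τ ^ (-(1 / 2 : ℝ)) * τ ^ (-ζ) := by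
    rw [← Real.rpow_add hτ]; ring_nf
  calc _ ≤ _ := h τ r s hτ hr hs
    _ ≤ C * (τ ^ (-(1 / 2 : ℝ)) * ((T ^ 2 + (r + s) ^ 2) ^ (-ζ) *
        (2 ^ ζ * (1 + T ^ (2 * ζ) * τ ^ (-ζ)))) * 1) := by gcongr
    _ = _ := by rw [h8]; ring

theorem div_one_add_le_one_sub_exp_neg {u : ℝ} (hu : 0 ≤ u) : u / (1 + u) ≤ 1 - Real.exp (-u) := by
  rw [Real.exp_neg, show u / (1 + u) = 1 - (1 + u)⁻¹ by field_simp; ring]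
  have : (Real.exp u)⁻¹ ≤ (1 + u)⁻¹ := by
    have := Real.add_one_le_exp u
    gcongr
    linarith
  linarith

theorem exists_gaussProfile_le_one_sub_exp {ζ : ℝ} (hζ : 0 ≤ ζ) :
    ∃ C : ℝ, 0 < C ∧ ∀ τ r s : ℝ, 0 < τ → 0 < r → 0 < s → 0 < |r - s| →
      gaussProfile ζ τ r s ≤ C * (|r - s|⁻¹ * (r + s) ^ (-(2 * ζ))) *
        (1 - Real.exp (-τ * (|r - s| ^ 2)⁻¹)) := by
  obtain ⟨C, hC, h⟩ := exists_gaussProfile_le hζ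
  obtain ⟨D, hD, h'⟩ := exists_one_add_rpow_mul_exp_neg_le 2 (by norm_num)
  refine ⟨C * D, by positivity, fun τ r s hτ hr hs hd => ?_⟩
  set d := |r - s| with hd'
  set w := d ^ 2 / τ with hw
  have hw0 : 0 < w := by positivity
  have h1 : τ ^ (-(1 / 2 : ℝ)) * Real.exp (-(w / 8)) ≤
      D * d⁻¹ * (1 - Real.exp (-τ * (d ^ 2)⁻¹)) := by
    have hτw : τ = d ^ 2 / w := by rw [hw]; field_simp
    have h2 : τ ^ (-(1 / 2 : ℝ)) = d⁻¹ * √w := by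
      rw [hτw, Real.rpow_neg (by positivity), ← Real.sqrt_eq_rpow, Real.sqrt_div (by positivity),
        Real.sqrt_sq hd.le, inv_div]
      ring
    have h3 : √w ≤ 1 + w := by
      rw [Real.sqrt_le_left (by positivity)]
      nlinarith
    have h4 : (1 + w)⁻¹ ≤ 1 - Real.exp (-τ * (d ^ 2)⁻¹) := by
      have h5 := div_one_add_le_one_sub_exp_neg (u := w⁻¹) (by positivity)
      have h6 : -τ * (d ^ 2)⁻¹ = -w⁻¹ := by rw [hw]; field_simp
      rw [h6]
      refine le_trans (le_of_eq ?_) h5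
      field_simp
      ring
    have h7 := h' w hw0.le
    rw [Real.rpow_two] at h7
    calc τ ^ (-(1 / 2 : ℝ)) * Real.exp (-(w / 8)) ≤ d⁻¹ * (1 + w) * Real.exp (-(w / 8)) := by
          rw [h2]; gcongr
      _ = ((1 + w) ^ 2 * Real.exp (-(w / 8))) * d⁻¹ * (1 + w)⁻¹ := by field_simp
      _ ≤ _ := by gcongr
  have h8 : (τ + (r + s) ^ 2) ^ (-ζ) ≤ (r + s) ^ (-(2 * ζ)) := by
    rw [show -(2 * ζ) = 2 * (-ζ) by ring, Real.rpow_mul (by positivity), Real.rpow_two]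
    exact Real.rpow_le_rpow_of_nonpos (by positivity) (by linarith) (by linarith)
  have h9 : (r - s) ^ 2 / τ = w := by rw [hw, hd', sq_abs]
  calc _ ≤ _ := h τ r s hτ hr hs
    _ ≤ C * (τ ^ (-(1 / 2 : ℝ)) * (r + s) ^ (-(2 * ζ)) * Real.exp (-(w / 8))) := by
      rw [h9]; gcongr
    _ = C * (r + s) ^ (-(2 * ζ)) * (τ ^ (-(1 / 2 : ℝ)) * Real.exp (-(w / 8))) := by ring
    _ ≤ C * (r + s) ^ (-(2 * ζ)) * (D * d⁻¹ * (1 - Real.exp (-τ * (d ^ 2)⁻¹))) := by gcongr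
    _ = _ := by ring

namespace IsStableSubordinatorDensity

variable {α : ℝ} {σ : ℝ → ℝ → ℝ}

theorem integrableOn_exp_mul (hσ : IsStableSubordinatorDensity α σ) {t l : ℝ} (ht : 0 < t)
    (hl : 0 ≤ l) : IntegrableOn (fun τ => Real.exp (-τ * l) * σ t τ) (Ioi 0) := by
  by_contra h
  have := hσ.2.2 t l ht hl
  rw [integral_undef h] at this
  exact (Real.exp_pos _).ne this

theorem integrableOn (hσ : IsStableSubordinatorDensity α σ) {t : ℝ} (ht : 0 < t) :
    IntegrableOn (σ t) (Ioi 0) := by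
  simpa using hσ.integrableOn_exp_mul ht le_rfl

theorem integral_eq_one (hσ : IsStableSubordinatorDensity α σ) (hα : 0 < α) {t : ℝ}
    (ht : 0 < t) : ∫ τ in Ioi (0 : ℝ), σ t τ = 1 := by
  simpa [Real.zero_rpow (half_pos hα).ne'] using hσ.2.2 t 0 ht le_rfl

theorem integrableOn_one_sub_exp_mul (hσ : IsStableSubordinatorDensity α σ) {t l : ℝ}
    (ht : 0 < t) (hl : 0 ≤ l) :
    IntegrableOn (fun τ => (1 - Real.exp (-τ * l)) * σ t τ) (Ioi 0) := by
  simp only [sub_mul, one_mul]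
  exact (hσ.integrableOn ht).sub (hσ.integrableOn_exp_mul ht hl)

theorem integral_one_sub_exp_mul (hσ : IsStableSubordinatorDensity α σ) (hα : 0 < α) {t l : ℝ}
    (ht : 0 < t) (hl : 0 ≤ l) :
    ∫ τ in Ioi (0 : ℝ), (1 - Real.exp (-τ * l)) * σ t τ = 1 - Real.exp (-t * l ^ (α / 2)) := by
  simp only [sub_mul, one_mul]
  rw [integral_sub (hσ.integrableOn ht) (hσ.integrableOn_exp_mul ht hl), hσ.integral_eq_one hα ht,
    hσ.2.2 t l ht hl]

theorem negative_moment (hσ : IsStableSubordinatorDensity α σ) (hα : 0 < α) {a t : ℝ}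
    (ha : 0 < a) (ht : 0 < t) :
    IntegrableOn (fun τ => τ ^ (-a) * σ t τ) (Ioi 0) ∧
      ∫ τ in Ioi (0 : ℝ), τ ^ (-a) * σ t τ =
        2 / α * Real.Gamma (2 * a / α) / Real.Gamma a * (t ^ (1 / α)) ^ (-(2 * a)) := by
  have hΓ : 0 < Real.Gamma a := Real.Gamma_pos_of_pos ha
  set μ := (volume : Measure ℝ).restrict (Ioi 0) with hμ
  have hpos : ∀ᵐ x ∂μ, 0 < x := ae_restrict_mem measurableSet_Ioi
  set f : ℝ × ℝ → ℝ := fun p => p.2 ^ (a - 1) * (Real.exp (-p.1 * p.2) * σ t p.1) with hf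
  have hfm : Measurable f := by
    have := hσ.2.1 t ht
    fun_prop
  have hnorm : ∀ᵐ l ∂μ, ∫ τ, ‖f (τ, l)‖ ∂μ = l ^ (a - 1) * Real.exp (-t * l ^ (α / 2)) := by
    filter_upwards [hpos] with l hl
    rw [← hσ.2.2 t l ht hl.le, ← integral_const_mul]
    refine integral_congr_ae ?_
    filter_upwards [hpos] with τ hτ
    have := hσ.1 t ht τ hτ
    rw [Real.norm_of_nonneg]
    positivity
  have hint : Integrable f (μ.prod μ) := by
    rw [integrable_prod_iff' hfm.aestronglyMeasurable]
    refine ⟨?_, ?_⟩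
    · filter_upwards [hpos] with l hl
      exact (hσ.integrableOn_exp_mul ht hl.le).const_mul (l ^ (a - 1))
    · exact (integrableOn_rpow_mul_exp_neg_mul_rpow (by linarith) (half_pos hα) ht).congr
        (hnorm.mono fun l hl => hl.symm)
  have hinner : ∀ᵐ τ ∂μ, ∫ l, f (τ, l) ∂μ = Real.Gamma a * (τ ^ (-a) * σ t τ) := by
    filter_upwards [hpos] with τ hτ
    have h1 := Real.integral_rpow_mul_exp_neg_mul_Ioi ha hτ
    calc ∫ l, f (τ, l) ∂μ = ∫ l, (l ^ (a - 1) * Real.exp (-(τ * l))) * σ t τ ∂μ := by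
          simp only [hf, neg_mul, mul_assoc]
      _ = _ := by
          rw [integral_mul_const, h1, one_div, Real.inv_rpow hτ.le, Real.rpow_neg hτ.le]
          ring
  have hint' : Integrable (fun τ => Real.Gamma a * (τ ^ (-a) * σ t τ)) μ :=
    hint.integral_prod_left.congr hinner
  refine ⟨(hint'.const_mul (Real.Gamma a)⁻¹).congr (ae_of_all _ fun τ => ?_), ?_⟩
  · simp only
    rw [inv_mul_cancel_left₀ hΓ.ne']
  · have h2 : Real.Gamma a * ∫ τ, τ ^ (-a) * σ t τ ∂μ =
        ∫ l, l ^ (a - 1) * Real.exp (-t * l ^ (α / 2)) ∂μ := by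
      rw [← integral_const_mul, ← integral_congr_ae hinner,
        integral_integral_swap (f := fun τ l => f (τ, l)) hint]
      refine integral_congr_ae ?_
      filter_upwards [hpos] with l hl
      rw [← hσ.2.2 t l ht hl.le, ← integral_const_mul]
    rw [integral_rpow_mul_exp_neg_mul_rpow (half_pos hα) (by linarith) ht] at h2
    rw [← Real.rpow_mul ht.le, eq_div_of_mul_eq hΓ.ne' ((mul_comm _ _).trans h2),
      show -(a - 1 + 1) / (α / 2) = 1 / α * -(2 * a) by field_simp; ring,
      show (a - 1 + 1) / (α / 2) = 2 * a / α by field_simp; ring]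
    field_simp

end IsStableSubordinatorDensity

section KernelBounds

variable {ζ α : ℝ} {σ : ℝ → ℝ → ℝ}

theorem besselHeat_nonneg (hζ : 0 ≤ ζ) {τ r s : ℝ} (hτ : 0 < τ) (hr : 0 < r) (hs : 0 < s) :
    0 ≤ besselHeat ζ τ r s := by
  obtain ⟨c, C, hc, -, h⟩ := exists_besselHeat_bounds hζ
  exact (mul_pos hc (gaussProfile_pos hτ hr hs)).le.trans (h τ r s hτ hr hs).1

theorem subKernel_nonneg (hζ : 0 ≤ ζ) (hσ : IsStableSubordinatorDensity α σ) {t r s : ℝ}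
    (ht : 0 < t) (hr : 0 < r) (hs : 0 < s) : 0 ≤ subKernel ζ σ t r s :=
  setIntegral_nonneg measurableSet_Ioi fun τ hτ =>
    mul_nonneg (besselHeat_nonneg hζ hτ hr hs) (hσ.1 t ht τ hτ)

theorem subKernel_comm (ζ : ℝ) (σ : ℝ → ℝ → ℝ) (t r s : ℝ) :
    subKernel ζ σ t r s = subKernel ζ σ t s r := by
  simp only [subKernel, besselHeat, mul_comm r s, add_comm (r ^ 2)]

theorem exists_subKernel_le_near (hζ : 0 ≤ ζ) (hα : 0 < α)
    (hσ : IsStableSubordinatorDensity α σ) :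
    ∃ C : ℝ, 0 < C ∧ ∀ t r s : ℝ, 0 < t → 0 < r → 0 < s →
      IntegrableOn (fun τ => besselHeat ζ τ r s * σ t τ) (Ioi 0) ∧
      subKernel ζ σ t r s ≤
        C * ((t ^ (1 / α))⁻¹ * ((t ^ (1 / α)) ^ 2 + (r + s) ^ 2) ^ (-ζ)) := by
  obtain ⟨_, C₁, _, hC₁, h₁⟩ := exists_besselHeat_bounds hζ
  obtain ⟨C₂, hC₂, h₂⟩ := exists_gaussProfile_le_moments hζ
  have hm : ∀ {a : ℝ}, 0 < a → 0 < 2 / α * Real.Gamma (2 * a / α) / Real.Gamma a := fun {a} ha => by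
    have := Real.Gamma_pos_of_pos ha
    have : 0 < Real.Gamma (2 * a / α) := Real.Gamma_pos_of_pos (by positivity)
    positivity
  set m : ℝ → ℝ := fun a => 2 / α * Real.Gamma (2 * a / α) / Real.Gamma a with hm'
  have hm1 : 0 < m (1 / 2) := hm (by norm_num)
  have hm2 : 0 < m (1 / 2 + ζ) := hm (by positivity)
  refine ⟨C₁ * C₂ * (m (1 / 2) + m (1 / 2 + ζ)), by positivity, fun t r s ht hr hs => ?_⟩
  set T := t ^ (1 / α) with hT'
  have hT : 0 < T := by positivity
  obtain ⟨i1, e1⟩ := hσ.negative_moment hα (a := 1 / 2) (by norm_num) ht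
  obtain ⟨i2, e2⟩ := hσ.negative_moment hα (a := 1 / 2 + ζ) (by positivity) ht
  set K := C₁ * C₂ * (T ^ 2 + (r + s) ^ 2) ^ (-ζ) with hK'
  have hint : IntegrableOn (fun τ => K * (τ ^ (-(1 / 2 : ℝ)) * σ t τ +
      T ^ (2 * ζ) * (τ ^ (-(1 / 2 + ζ)) * σ t τ))) (Ioi 0) :=
    (i1.add (i2.const_mul _)).const_mul _
  have hle : ∀ τ ∈ Ioi (0 : ℝ), besselHeat ζ τ r s * σ t τ ≤ K * (τ ^ (-(1 / 2 : ℝ)) * σ t τ +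
      T ^ (2 * ζ) * (τ ^ (-(1 / 2 + ζ)) * σ t τ)) := fun τ hτ => by
    have hs0 := hσ.1 t ht τ hτ
    calc besselHeat ζ τ r s * σ t τ ≤ (C₁ * (C₂ * (T ^ 2 + (r + s) ^ 2) ^ (-ζ) *
        (τ ^ (-(1 / 2 : ℝ)) + T ^ (2 * ζ) * τ ^ (-(1 / 2 + ζ))))) * σ t τ := by
          gcongr
          exact ((h₁ τ r s hτ hr hs).2).trans (by gcongr; exact h₂ T τ r s hT hτ hr hs)
      _ = _ := by rw [hK']; ring
  have hnn : ∀ τ ∈ Ioi (0 : ℝ), 0 ≤ besselHeat ζ τ r s * σ t τ := fun τ hτ =>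
    mul_nonneg (besselHeat_nonneg hζ hτ hr hs) (hσ.1 t ht τ hτ)
  have hI : IntegrableOn (fun τ => besselHeat ζ τ r s * σ t τ) (Ioi 0) := by
    refine hint.mono' ((measurable_besselHeat ζ r s).mul (hσ.2.1 t ht)).aestronglyMeasurable ?_
    filter_upwards [ae_restrict_mem measurableSet_Ioi] with τ hτ
    rw [Real.norm_of_nonneg (hnn τ hτ)]
    exact hle τ hτ
  refine ⟨hI, (setIntegral_mono_on hI hint measurableSet_Ioi hle).trans (le_of_eq ?_)⟩
  rw [integral_const_mul, integral_add i1 (i2.const_mul _), integral_const_mul, e1, e2]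
  have h3 : T ^ (2 * ζ) * T ^ (-(2 * (1 / 2 + ζ))) = T⁻¹ := by
    rw [← Real.rpow_add hT, ← Real.rpow_neg_one]; ring_nf
  have h4 : T ^ (-(2 * (1 / 2 : ℝ))) = T⁻¹ := by
    rw [← Real.rpow_neg_one]; norm_num
  rw [h4, hK']
  calc _ = C₁ * C₂ * (T ^ 2 + (r + s) ^ 2) ^ (-ζ) * (m (1 / 2) * T⁻¹ +
        m (1 / 2 + ζ) * (T ^ (2 * ζ) * T ^ (-(2 * (1 / 2 + ζ))))) := by rw [hm']; ring
    _ = _ := by rw [h3]; ring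

theorem exists_subKernel_le_far (hζ : 0 ≤ ζ) (hα : 0 < α)
    (hσ : IsStableSubordinatorDensity α σ) :
    ∃ C : ℝ, 0 < C ∧ ∀ t r s : ℝ, 0 < t → 0 < r → 0 < s → 0 < |r - s| →
      subKernel ζ σ t r s ≤ C * (t * |r - s| ^ (-(1 + α)) * (r + s) ^ (-(2 * ζ))) := by
  obtain ⟨_, C₁, _, hC₁, h₁⟩ := exists_besselHeat_bounds hζ
  obtain ⟨C₂, hC₂, h₂⟩ := exists_gaussProfile_le_one_sub_exp hζ
  obtain ⟨_, _, h₃⟩ := exists_subKernel_le_near hζ hα hσ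
  refine ⟨C₁ * C₂, by positivity, fun t r s ht hr hs hd => ?_⟩
  set d := |r - s| with hd'
  have hl : 0 ≤ (d ^ 2)⁻¹ := by positivity
  have hint := (hσ.integrableOn_one_sub_exp_mul ht hl).const_mul
    (C₁ * C₂ * (d⁻¹ * (r + s) ^ (-(2 * ζ))))
  refine (setIntegral_mono_on (h₃ t r s ht hr hs).1 hint measurableSet_Ioi
    fun τ hτ => ?_).trans ?_
  · have hs0 := hσ.1 t ht τ hτ
    calc besselHeat ζ τ r s * σ t τ ≤ (C₁ * (C₂ * (d⁻¹ * (r + s) ^ (-(2 * ζ))) *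
          (1 - Real.exp (-τ * (d ^ 2)⁻¹)))) * σ t τ := by
          gcongr
          exact ((h₁ τ r s hτ hr hs).2).trans (by gcongr; exact h₂ τ r s hτ hr hs hd)
      _ = _ := by ring
  · rw [integral_const_mul, hσ.integral_one_sub_exp_mul hα ht hl]
    have h4 : ((d ^ 2)⁻¹) ^ (α / 2) = d ^ (-α) := by
      rw [← Real.rpow_two, ← Real.rpow_neg hd.le, ← Real.rpow_mul hd.le]
      ring_nf
    have h5 : 1 - Real.exp (-t * ((d ^ 2)⁻¹) ^ (α / 2)) ≤ t * d ^ (-α) := by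
      rw [h4]
      have := Real.add_one_le_exp (-t * d ^ (-α))
      linarith
    have h6 : d ^ (-(1 + α)) = d⁻¹ * d ^ (-α) := by
      rw [neg_add, Real.rpow_add hd, Real.rpow_neg_one]
    calc _ ≤ C₁ * C₂ * (d⁻¹ * (r + s) ^ (-(2 * ζ))) * (t * d ^ (-α)) := by gcongr
      _ = _ := by rw [h6]; ring

/-- A combination of `1 - e^{-λv}` which is positive only on a window `ε ≤ v ≤ M`. -/
noncomputable def windowCombination (ε M v : ℝ) : ℝ :=
  (1 - Real.exp (-v)) - 2 * ε * (1 - Real.exp (-(v / ε))) - 2 * (1 - Real.exp (-(v / M)))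

theorem windowCombination_le_one {ε M v : ℝ} (hε : 0 < ε) (hM : 0 < M) (hv : 0 ≤ v) :
    windowCombination ε M v ≤ 1 := by
  have h1 : Real.exp (-(v / ε)) ≤ 1 := by
    rw [Real.exp_le_one_iff, Left.neg_nonpos_iff]; positivity
  have h2 : Real.exp (-(v / M)) ≤ 1 := by
    rw [Real.exp_le_one_iff, Left.neg_nonpos_iff]; positivity
  have h3 := Real.exp_pos (-v)
  have h4 : 0 ≤ 2 * ε * (1 - Real.exp (-(v / ε))) := mul_nonneg (by positivity) (by linarith)
  unfold windowCombination
  linarith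

theorem windowCombination_nonpos {ε M v : ℝ} (hε : 0 < ε) (hM : 0 < M) (hv : 0 ≤ v)
    (h : v < ε ∨ M < v) : windowCombination ε M v ≤ 0 := by
  have h1 : Real.exp (-(v / ε)) ≤ 1 := by
    rw [Real.exp_le_one_iff, Left.neg_nonpos_iff]; positivity
  have h2 : Real.exp (-(v / M)) ≤ 1 := by
    rw [Real.exp_le_one_iff, Left.neg_nonpos_iff]; positivity
  have h3 := Real.exp_pos (-v)
  have h4 : 0 ≤ 2 * ε * (1 - Real.exp (-(v / ε))) := mul_nonneg (by positivity) (by linarith)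
  unfold windowCombination
  rcases h with h | h
  · have h5 := Real.add_one_le_exp (-v)
    have h6 := div_one_add_le_one_sub_exp_neg (u := v / ε) (by positivity)
    have h7 : v / ε < 1 := by rwa [div_lt_one hε]
    have h8 : v / ε / 2 ≤ v / ε / (1 + v / ε) :=
      div_le_div_of_nonneg_left (by positivity) (by positivity) (by linarith)
    have h9 : v ≤ 2 * ε * (1 - Real.exp (-(v / ε))) := by
      calc v = 2 * ε * (v / ε / 2) := by field_simp
        _ ≤ _ := by gcongr; exact h8.trans h6
    linarith
  · have h6 := div_one_add_le_one_sub_exp_neg (u := v / M) (by positivity)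
    have h7 : 1 < v / M := by rwa [one_lt_div hM]
    have h8 : 1 / 2 ≤ v / M / (1 + v / M) := by
      rw [div_le_div_iff₀ (by norm_num) (by positivity)]
      linarith
    linarith

theorem windowCombination_le_gaussProfile (hζ : 0 ≤ ζ) {ε M X τ r s : ℝ} (hε : 0 < ε)
    (hM : 1 ≤ M) (hτ : 0 < τ) (hr : 0 < r) (hs : 0 < s) (hX : 0 < X) (hd : |r - s| ≤ X) :
    M ^ (-(1 / 2 + ζ)) * Real.exp (-(1 / (4 * ε))) * (X⁻¹ * (X ^ 2 + r * s) ^ (-ζ)) *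
      windowCombination ε M (τ / X ^ 2) ≤ gaussProfile ζ τ r s := by
  have hM0 : 0 < M := by linarith
  have hrs : 0 < r * s := mul_pos hr hs
  have hK : 0 ≤ M ^ (-(1 / 2 + ζ)) * Real.exp (-(1 / (4 * ε))) *
      (X⁻¹ * (X ^ 2 + r * s) ^ (-ζ)) := by positivity
  have hv : 0 ≤ τ / X ^ 2 := by positivity
  by_cases h : τ / X ^ 2 < ε ∨ M < τ / X ^ 2
  · exact (mul_nonpos_of_nonneg_of_nonpos hK (windowCombination_nonpos hε hM0 hv h)).trans
      (gaussProfile_pos hτ hr hs).le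
  · push Not at h
    obtain ⟨h1, h2⟩ := h
    rw [le_div_iff₀ (by positivity)] at h1
    rw [div_le_iff₀ (by positivity)] at h2
    refine (mul_le_of_le_one_right hK (windowCombination_le_one hε hM0 hv)).trans ?_
    have h3 : M ^ (-(1 / 2 : ℝ)) * X⁻¹ ≤ τ ^ (-(1 / 2 : ℝ)) := by
      have : X⁻¹ = (X ^ 2) ^ (-(1 / 2 : ℝ)) := by
        rw [Real.rpow_neg (by positivity), ← Real.sqrt_eq_rpow, Real.sqrt_sq hX.le]
      rw [this, ← Real.mul_rpow hM0.le (by positivity)]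
      exact Real.rpow_le_rpow_of_nonpos hτ h2 (by norm_num)
    have h4 : M ^ (-ζ) * (X ^ 2 + r * s) ^ (-ζ) ≤ (τ + r * s / 2) ^ (-ζ) := by
      rw [← Real.mul_rpow hM0.le (by positivity)]
      refine Real.rpow_le_rpow_of_nonpos (by positivity) ?_ (by linarith)
      nlinarith
    have h5 : Real.exp (-(1 / (4 * ε))) ≤ Real.exp (-(r - s) ^ 2 / (4 * τ)) := by
      rw [Real.exp_le_exp, neg_div, neg_le_neg_iff, div_le_div_iff₀ (by positivity) (by positivity)]
      have : (r - s) ^ 2 ≤ X ^ 2 := by rw [← sq_abs]; gcongr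
      nlinarith
    calc _ = (M ^ (-(1 / 2 : ℝ)) * X⁻¹) * (M ^ (-ζ) * (X ^ 2 + r * s) ^ (-ζ)) *
          Real.exp (-(1 / (4 * ε))) := by
          rw [neg_add, Real.rpow_add hM0]; ring
      _ ≤ _ := by unfold gaussProfile; gcongr

theorem integral_windowCombination (hα0 : 0 < α) (hσ : IsStableSubordinatorDensity α σ)
    {ε M X t : ℝ} (hε : 0 < ε) (hM : 0 < M) (hεα : ε ^ (1 - α / 2) = 1 / 16)
    (hMα : M ^ (-(α / 2)) = 1 / 16) (ht : 0 < t) (hX : 0 < X) (htX : t ≤ X ^ α) :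
    IntegrableOn (fun τ => windowCombination ε M (τ / X ^ 2) * σ t τ) (Ioi 0) ∧
      t * X ^ (-α) / 4 ≤ ∫ τ in Ioi (0 : ℝ), windowCombination ε M (τ / X ^ 2) * σ t τ := by
  have l0 : 0 ≤ (X ^ 2)⁻¹ := by positivity
  have l1 : 0 ≤ (ε * X ^ 2)⁻¹ := by positivity
  have l2 : 0 ≤ (M * X ^ 2)⁻¹ := by positivity
  have i0 := hσ.integrableOn_one_sub_exp_mul ht l0
  have i1 := (hσ.integrableOn_one_sub_exp_mul ht l1).const_mul (2 * ε)
  have i2 := (hσ.integrableOn_one_sub_exp_mul ht l2).const_mul 2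
  have heq : (fun τ => windowCombination ε M (τ / X ^ 2) * σ t τ) = fun τ =>
      (1 - Real.exp (-τ * (X ^ 2)⁻¹)) * σ t τ -
        2 * ε * ((1 - Real.exp (-τ * (ε * X ^ 2)⁻¹)) * σ t τ) -
        2 * ((1 - Real.exp (-τ * (M * X ^ 2)⁻¹)) * σ t τ) := by
    funext τ
    have e0 : -τ * (X ^ 2)⁻¹ = -(τ / X ^ 2) := by ring
    have e1 : -τ * (ε * X ^ 2)⁻¹ = -(τ / X ^ 2 / ε) := by field_simp
    have e2 : -τ * (M * X ^ 2)⁻¹ = -(τ / X ^ 2 / M) := by field_simp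
    rw [windowCombination, e0, e1, e2]
    ring
  rw [heq]
  have i01 : IntegrableOn (fun τ => (1 - Real.exp (-τ * (X ^ 2)⁻¹)) * σ t τ -
      2 * ε * ((1 - Real.exp (-τ * (ε * X ^ 2)⁻¹)) * σ t τ)) (Ioi 0) := i0.sub i1
  refine ⟨i01.sub i2, ?_⟩
  rw [integral_sub i01 i2, integral_sub i0 i1, integral_const_mul, integral_const_mul,
    hσ.integral_one_sub_exp_mul hα0 ht l0, hσ.integral_one_sub_exp_mul hα0 ht l1,
    hσ.integral_one_sub_exp_mul hα0 ht l2]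
  have p0 : ((X ^ 2)⁻¹) ^ (α / 2) = X ^ (-α) := by
    rw [← Real.rpow_two, ← Real.rpow_neg hX.le, ← Real.rpow_mul hX.le]
    ring_nf
  have p1 : ∀ {b : ℝ}, 0 < b → ((b * X ^ 2)⁻¹) ^ (α / 2) = b ^ (-(α / 2)) * X ^ (-α) :=
    fun {b} hb => by
      rw [mul_inv, Real.mul_rpow (by positivity) (by positivity), p0, Real.inv_rpow hb.le,
        Real.rpow_neg hb.le]
  rw [p0, p1 hε, p1 hM, hMα]
  set y := t * X ^ (-α) with hy
  have hy0 : 0 ≤ y := by positivity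
  have hy1 : y ≤ 1 := by
    rw [hy, Real.rpow_neg hX.le, ← div_eq_mul_inv, div_le_one (by positivity)]
    exact htX
  have a0 : y / 2 ≤ 1 - Real.exp (-t * X ^ (-α)) := by
    have h1 := div_one_add_le_one_sub_exp_neg hy0
    have h2 : y / 2 ≤ y / (1 + y) := div_le_div_of_nonneg_left hy0 (by positivity) (by linarith)
    rw [show -t * X ^ (-α) = -y by rw [hy]; ring]
    linarith
  have a1 : 2 * ε * (1 - Real.exp (-t * (ε ^ (-(α / 2)) * X ^ (-α)))) ≤ y / 8 := by
    have h1 := Real.add_one_le_exp (-t * (ε ^ (-(α / 2)) * X ^ (-α)))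
    have h2 : ε * ε ^ (-(α / 2)) = 1 / 16 := by
      rw [← hεα, sub_eq_add_neg, Real.rpow_add hε, Real.rpow_one]
    calc _ ≤ 2 * ε * (t * (ε ^ (-(α / 2)) * X ^ (-α))) := by gcongr; linarith
      _ = 2 * (ε * ε ^ (-(α / 2))) * y := by rw [hy]; ring
      _ = _ := by rw [h2]; ring
  have a2 : 2 * (1 - Real.exp (-t * (1 / 16 * X ^ (-α)))) ≤ y / 8 := by
    have h1 := Real.add_one_le_exp (-t * (1 / 16 * X ^ (-α)))
    have h2 : t * (1 / 16 * X ^ (-α)) = y / 16 := by rw [hy]; ring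
    linarith
  linarith

theorem exists_le_subKernel (hζ : 0 ≤ ζ) (hα0 : 0 < α) (hα2 : α < 2)
    (hσ : IsStableSubordinatorDensity α σ) :
    ∃ c : ℝ, 0 < c ∧ ∀ t r s X : ℝ, 0 < t → 0 < r → 0 < s → t ^ (1 / α) ≤ X → |r - s| ≤ X →
      c * (t * X ^ (-(1 + α)) * (X ^ 2 + r * s) ^ (-ζ)) ≤ subKernel ζ σ t r s := by
  obtain ⟨c, _, hc, _, h₁⟩ := exists_besselHeat_bounds hζ
  obtain ⟨_, _, h₃⟩ := exists_subKernel_le_near hζ hα0 hσ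
  have hb : 0 < 1 - α / 2 := by linarith
  set ε : ℝ := (1 / 16) ^ (1 - α / 2)⁻¹ with hε'
  set M : ℝ := 16 ^ (α / 2)⁻¹ with hM'
  have hε : 0 < ε := by positivity
  have hM1 : 1 ≤ M := Real.one_le_rpow (by norm_num) (by positivity)
  have hM : 0 < M := by linarith
  have hεα : ε ^ (1 - α / 2) = 1 / 16 := Real.rpow_inv_rpow (by norm_num) hb.ne'
  have hMα : M ^ (-(α / 2)) = 1 / 16 := by
    rw [Real.rpow_neg hM.le, hM', Real.rpow_inv_rpow (by norm_num) (by positivity)]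
    norm_num
  refine ⟨c * (M ^ (-(1 / 2 + ζ)) * Real.exp (-(1 / (4 * ε)))) / 4, by positivity,
    fun t r s X ht hr hs htX hd => ?_⟩
  have hX : 0 < X := (Real.rpow_pos_of_pos ht _).trans_le htX
  have htX' : t ≤ X ^ α := by
    calc t = (t ^ (1 / α)) ^ α := by rw [one_div, Real.rpow_inv_rpow ht.le hα0.ne']
      _ ≤ _ := by gcongr
  obtain ⟨hI, hle⟩ := integral_windowCombination hα0 hσ hε hM hεα hMα ht hX htX'
  set K := c * (M ^ (-(1 / 2 + ζ)) * Real.exp (-(1 / (4 * ε))) *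
    (X⁻¹ * (X ^ 2 + r * s) ^ (-ζ))) with hK'
  have hK : 0 ≤ K := by positivity
  have key := setIntegral_mono_on (hI.const_mul K) (h₃ t r s ht hr hs).1 measurableSet_Ioi
    fun τ hτ => by
      have hs0 := hσ.1 t ht τ hτ
      calc K * (windowCombination ε M (τ / X ^ 2) * σ t τ) =
            (c * (M ^ (-(1 / 2 + ζ)) * Real.exp (-(1 / (4 * ε))) *
              (X⁻¹ * (X ^ 2 + r * s) ^ (-ζ)) * windowCombination ε M (τ / X ^ 2))) * σ t τ := by
            rw [hK']; ring
        _ ≤ besselHeat ζ τ r s * σ t τ := by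
            refine mul_le_mul_of_nonneg_right (le_trans ?_ (h₁ τ r s hτ hr hs).1) hs0
            gcongr
            exact windowCombination_le_gaussProfile hζ hε hM1 hτ hr hs hX hd
  rw [integral_const_mul] at key
  refine le_trans (le_of_eq ?_) ((mul_le_mul_of_nonneg_left hle hK).trans key)
  rw [hK', neg_add 1 α, Real.rpow_add hX, Real.rpow_neg_one]
  ring

end KernelBounds

theorem rpow_neg_le_rpow_neg_mul {a b q ζ : ℝ} (ha : 0 < a) (hb : 0 < b) (hq : 0 < q)
    (h : b ≤ a * q) (hζ : 0 ≤ ζ) : a ^ (-ζ) ≤ b ^ (-ζ) * q ^ ζ := by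
  have h1 : b ^ ζ ≤ a ^ ζ * q ^ ζ := by
    rw [← Real.mul_rpow ha.le hq.le]
    gcongr
  rw [Real.rpow_neg ha.le, Real.rpow_neg hb.le, inv_mul_eq_div, inv_eq_one_div,
    div_le_div_iff₀ (by positivity) (by positivity)]
  linarith

theorem exists_subKernel_le_mul_subKernel {ζ α : ℝ} (hζ : 0 ≤ ζ) (hα0 : 0 < α) (hα2 : α < 2)
    {σ : ℝ → ℝ → ℝ} (hσ : IsStableSubordinatorDensity α σ) :
    ∃ C : ℝ, 0 < C ∧ ∀ r s z t τ : ℝ, 0 < r → 0 < s → 0 < z → 0 < t → 0 < τ →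
      ((t + τ) ^ (1 / α) ≤ |r - s| ∧ |r - s| ≤ 2 * |r - z| ∨
        |r - s| ≤ (t + τ) ^ (1 / α) ∧ τ ≤ t) →
      subKernel ζ σ t r z ≤
        C * subKernel ζ σ (t + τ) r s * ((r + s + z) / (r + z)) ^ (2 * ζ) := by
  obtain ⟨c, hc, hL⟩ := exists_le_subKernel hζ hα0 hα2 hσ
  obtain ⟨C₁, hC₁, hU₁⟩ := exists_subKernel_le_near hζ hα0 hσ
  obtain ⟨C₂, hC₂, hU₂⟩ := exists_subKernel_le_far hζ hα0 hσ
  set b : ℝ := 2 ^ (1 / α) with hb'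
  have hb1 : 1 ≤ b := Real.one_le_rpow (by norm_num) (by positivity)
  have hb : 0 < b := by linarith
  refine ⟨C₂ * 2 ^ (1 + α) / c + C₁ * b * (b ^ 2) ^ ζ / c, by positivity,
    fun r s z t τ hr hs hz ht hτ h => ?_⟩
  have hD : 0 ≤ subKernel ζ σ (t + τ) r s := subKernel_nonneg hζ hσ (by positivity) hr hs
  set D := subKernel ζ σ (t + τ) r s with hD'
  set q := (r + s + z) / (r + z) with hq'
  have hq : 0 < q := by positivity
  have hqz : (r + z) * q = r + s + z := by rw [hq']; field_simp
  have hq1 : 1 ≤ q := by rw [hq', one_le_div (by positivity)]; linarith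
  have hrs : 0 < r * s := mul_pos hr hs
  rcases h with ⟨hd, hdz⟩ | ⟨hd, hτt⟩
  · have hd0 : 0 < |r - s| := (Real.rpow_pos_of_pos (by positivity) _).trans_le hd
    have hdz0 : 0 < |r - z| := by linarith
    have h1 := hL (t + τ) r s |r - s| (by positivity) hr hs hd le_rfl
    have h2 := hU₂ t r z ht hr hz hdz0
    have h3 : |r - z| ^ (-(1 + α)) ≤ |r - s| ^ (-(1 + α)) * 2 ^ (1 + α) :=
      rpow_neg_le_rpow_neg_mul hdz0 hd0 two_pos (by linarith) (by positivity)
    have h4 : (r + z) ^ (-(2 * ζ)) ≤ (r + s) ^ (-(2 * ζ)) * q ^ (2 * ζ) :=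
      rpow_neg_le_rpow_neg_mul (by positivity) (by positivity) hq (by linarith) (by positivity)
    have h5 : (r + s) ^ (-(2 * ζ)) ≤ (|r - s| ^ 2 + r * s) ^ (-ζ) := by
      rw [show -(2 * ζ) = 2 * (-ζ) by ring, Real.rpow_mul (by positivity), Real.rpow_two]
      refine Real.rpow_le_rpow_of_nonpos (by positivity) ?_ (by linarith)
      rw [sq_abs]
      nlinarith
    have h6 : c * (t * |r - s| ^ (-(1 + α)) * (r + s) ^ (-(2 * ζ))) ≤ D := by
      refine le_trans ?_ h1
      gcongr
      linarith
    calc subKernel ζ σ t r z ≤ _ := h2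
      _ ≤ C₂ * (t * (|r - s| ^ (-(1 + α)) * 2 ^ (1 + α)) *
          ((r + s) ^ (-(2 * ζ)) * q ^ (2 * ζ))) := by gcongr
      _ = C₂ * 2 ^ (1 + α) / c * (c * (t * |r - s| ^ (-(1 + α)) * (r + s) ^ (-(2 * ζ)))) *
          q ^ (2 * ζ) := by field_simp
      _ ≤ C₂ * 2 ^ (1 + α) / c * D * q ^ (2 * ζ) := by gcongr
      _ ≤ _ := by
        gcongr
        exact le_add_of_nonneg_right (by positivity)
  · set X := (t + τ) ^ (1 / α) with hX'
    have hX : 0 < X := by positivity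
    have h1 := hL (t + τ) r s X (by positivity) hr hs le_rfl hd
    have h2 := (hU₁ t r z ht hr hz).2
    set T := t ^ (1 / α) with hT'
    have hT : 0 < T := by positivity
    have hXT : X ≤ b * T := by
      rw [hX', hb', hT', ← Real.mul_rpow (by norm_num) ht.le]
      gcongr
      linarith
    have h3 : (t + τ) * X ^ (-(1 + α)) = X⁻¹ := by
      have : t + τ = X ^ α := by rw [hX', one_div, Real.rpow_inv_rpow (by positivity) hα0.ne']
      rw [this, ← Real.rpow_add hX, ← Real.rpow_neg_one]
      ring_nf
    rw [h3] at h1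
    have h4 : (T ^ 2 + (r + z) ^ 2) ^ (-ζ) ≤ (T ^ 2 + (r + s) ^ 2) ^ (-ζ) * q ^ (2 * ζ) := by
      rw [Real.rpow_mul hq.le, Real.rpow_two]
      refine rpow_neg_le_rpow_neg_mul (by positivity) (by positivity) (by positivity) ?_ hζ
      calc T ^ 2 + (r + s) ^ 2 ≤ T ^ 2 * q ^ 2 + ((r + z) * q) ^ 2 := by
            rw [hqz]
            refine add_le_add (le_mul_of_one_le_right (by positivity) (one_le_pow₀ hq1)) ?_
            exact pow_le_pow_left₀ (by positivity) (by linarith) 2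
        _ = _ := by ring
    have h5 : (T ^ 2 + (r + s) ^ 2) ^ (-ζ) ≤ (X ^ 2 + r * s) ^ (-ζ) * (b ^ 2) ^ ζ := by
      refine rpow_neg_le_rpow_neg_mul (by positivity) (by positivity) (by positivity) ?_ hζ
      calc X ^ 2 + r * s ≤ (b * T) ^ 2 + (r + s) ^ 2 * b ^ 2 := by
            refine add_le_add (pow_le_pow_left₀ hX.le hXT 2) ?_
            calc r * s ≤ (r + s) ^ 2 := by nlinarith
              _ ≤ _ := le_mul_of_one_le_right (by positivity) (one_le_pow₀ hb1)
        _ = _ := by ring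
    have h6 : T⁻¹ ≤ b * X⁻¹ := by
      rw [inv_eq_one_div, ← div_eq_mul_inv, div_le_div_iff₀ hT hX]
      linarith
    calc subKernel ζ σ t r z ≤ _ := h2
      _ ≤ C₁ * (b * X⁻¹ * ((X ^ 2 + r * s) ^ (-ζ) * (b ^ 2) ^ ζ * q ^ (2 * ζ))) := by
          gcongr
          exact h4.trans (by gcongr)
      _ = C₁ * b * (b ^ 2) ^ ζ / c * (c * (X⁻¹ * (X ^ 2 + r * s) ^ (-ζ))) * q ^ (2 * ζ) := by
          field_simp
      _ ≤ C₁ * b * (b ^ 2) ^ ζ / c * D * q ^ (2 * ζ) := by gcongr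
      _ ≤ _ := by
        gcongr
        exact le_add_of_nonneg_left (by positivity)

theorem stmt12 (ζ α : ℝ) (hζ : 0 ≤ ζ) (hα0 : 0 < α) (hα2 : α < 2)
    (σ : ℝ → ℝ → ℝ) (hσ : IsStableSubordinatorDensity α σ) :
    ∃ C : ℝ, 0 < C ∧
      ∀ r s z t τ : ℝ, 0 < r → 0 < s → 0 < z → 0 < t → 0 < τ →
        subKernel ζ σ t r z * subKernel ζ σ τ z s
          ≤ C * subKernel ζ σ (t + τ) r s *
            (((r + s + z) / (s + z)) ^ (2 * ζ) * subKernel ζ σ t r z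
              + ((r + s + z) / (r + z)) ^ (2 * ζ) * subKernel ζ σ τ z s) := by
  obtain ⟨C, hC, h⟩ := exists_subKernel_le_mul_subKernel hζ hα0 hα2 hσ
  refine ⟨C, hC, fun r s z t τ hr hs hz ht hτ => ?_⟩
  have hA : 0 ≤ subKernel ζ σ t r z := subKernel_nonneg hζ hσ ht hr hz
  have hB : 0 ≤ subKernel ζ σ τ z s := subKernel_nonneg hζ hσ hτ hz hs
  have hD : 0 ≤ subKernel ζ σ (t + τ) r s := subKernel_nonneg hζ hσ (by positivity) hr hs
  have hl := h r s z t τ hr hs hz ht hτ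
  have hr' := h s r z τ t hs hr hz hτ ht
  rw [subKernel_comm ζ σ τ s z, subKernel_comm ζ σ (τ + t) s r, add_comm τ t, add_comm s r,
    abs_sub_comm s r, abs_sub_comm s z] at hr'
  have key : subKernel ζ σ t r z ≤
        C * subKernel ζ σ (t + τ) r s * ((r + s + z) / (r + z)) ^ (2 * ζ) ∨
      subKernel ζ σ τ z s ≤
        C * subKernel ζ σ (t + τ) r s * ((r + s + z) / (s + z)) ^ (2 * ζ) := by
    rcases le_total ((t + τ) ^ (1 / α)) |r - s| with hd | hd
    · have htri := abs_sub_le r z s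
      rcases le_total |z - s| |r - z| with h' | h'
      · exact Or.inl (hl (Or.inl ⟨hd, by linarith⟩))
      · exact Or.inr (hr' (Or.inl ⟨hd, by linarith⟩))
    · rcases le_total τ t with h' | h'
      · exact Or.inl (hl (Or.inr ⟨hd, h'⟩))
      · exact Or.inr (hr' (Or.inr ⟨hd, h'⟩))
  have w₁ : 0 ≤ ((r + s + z) / (s + z)) ^ (2 * ζ) := by positivity
  have w₂ : 0 ≤ ((r + s + z) / (r + z)) ^ (2 * ζ) := by positivity
  rw [mul_add]
  rcases key with hk | hk
  · have := mul_le_mul_of_nonneg_right hk hB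
    have : 0 ≤ C * subKernel ζ σ (t + τ) r s *
        (((r + s + z) / (s + z)) ^ (2 * ζ) * subKernel ζ σ t r z) := by positivity
    linarith
  · have := mul_le_mul_of_nonneg_left hk hA
    have : 0 ≤ C * subKernel ζ σ (t + τ) r s *
        (((r + s + z) / (r + z)) ^ (2 * ζ) * subKernel ζ σ τ z s) := by positivity
    linarith
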